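/- arXiv:1008.2170 — 2 statements merged into one kernel-verified Lean document; each statement's English description precedes it below -/
import Mathlib

section
/- For n ≥ 3, the overlap number of the path P_n on n vertices equals n. -/
/-- Two finite sets overlap: they intersect and neither contains the other. -/
def Overlaps (A B : Finset ℕ) : Prop :=
  (A ∩ B).Nonempty ∧ ¬ A ⊆ B ∧ ¬ B ⊆ A

/-- An overlap representation of a graph: nonempty sets assigned to vertices such that
two vertices are adjacent iff their sets overlap. -/
def IsOverlapRep {V : Type*} (G : SimpleGraph V) (S : V → Finset ℕ) : Prop :=
  (∀ v, (S v).Nonempty) ∧ ∀ u v, G.Adj u v ↔ Overlaps (S u) (S v)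

/-- The overlap number: the minimum number of elements used in an overlap representation. -/
noncomputable def overlapNumber {V : Type*} (G : SimpleGraph V) : ℕ :=
  sInf {n | ∃ S : V → Finset ℕ, IsOverlapRep G S ∧ (⋃ v, (S v : Set ℕ)).ncard = n}

def PRep (n : ℕ) (S : ℕ → Finset ℕ) : Prop :=
  (∀ i, i + 1 < n → Overlaps (S i) (S (i+1))) ∧
  (∀ i j, i + 1 < j → j < n → ¬ Overlaps (S i) (S j))

theorem ov_iff (A B : Finset ℕ) : Overlaps A B ↔
    (∃ a, a ∈ A ∧ a ∈ B) ∧ (∃ a, a ∈ A ∧ a ∉ B) ∧ (∃ a, a ∈ B ∧ a ∉ A) := by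
  simp [Overlaps, Finset.Nonempty, Finset.not_subset]

theorem ov_symm {A B : Finset ℕ} (h : Overlaps A B) : Overlaps B A := by
  rw [ov_iff] at *
  obtain ⟨⟨a, h1, h2⟩, h3, h4⟩ := h
  exact ⟨⟨a, h2, h1⟩, h4, h3⟩

theorem ov_erase {A B : Finset ℕ} (z : ℕ) (h : Overlaps (A.erase z) (B.erase z)) :
    Overlaps A B := by
  rw [ov_iff] at *
  obtain ⟨⟨a, h1, h2⟩, ⟨b, h3, h4⟩, ⟨c, h5, h6⟩⟩ := h
  simp only [Finset.mem_erase] at *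
  exact ⟨⟨a, h1.2, h2.2⟩, ⟨b, by tauto⟩, ⟨c, by tauto⟩⟩

theorem ov_prop {A B C : Finset ℕ} (hAB : Overlaps A B) (hBC : ¬ Overlaps B C)
    (h : A ⊆ C) : B ⊆ C := by
  by_contra hn
  obtain ⟨⟨a, h1⟩, h2, h3⟩ := hAB
  rw [Finset.mem_inter] at h1
  refine hBC ⟨⟨a, Finset.mem_inter.2 ⟨h1.2, h h1.1⟩⟩, hn, fun hc => h2 (h.trans hc)⟩

theorem down {n : ℕ} {S : ℕ → Finset ℕ} (hS : PRep n S) {k : ℕ} (hk : k < n) (j : ℕ)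
    (hj : j + 1 < k) (h : S j ⊆ S k) (i : ℕ) (hi : i ≤ j) : S i ⊆ S k := by
  induction hi using Nat.decreasingInduction with
  | self => exact h
  | of_succ i hi ih =>
    exact ov_prop (ov_symm (hS.1 i (by omega))) (hS.2 i k (by omega) hk) ih

theorem step {m : ℕ} {S : ℕ → Finset ℕ} (hm : 1 ≤ m) (hS : PRep (m+3) S)
    (hout : ∀ j ≤ m, ¬ S j ⊆ S (m+2)) :
    ∃ z ∈ S (m+2), PRep (m+2) (fun i => (S i).erase z) := by
  obtain ⟨⟨x, hx1, hx2⟩, ⟨w0, hw1, hw2⟩, ⟨y, hy2, hy1⟩⟩ :=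
    (ov_iff _ _).1 (hS.1 (m+1) (by omega))
  have hxy : x ≠ y := by rintro rfl; exact hy1 hx1
  have key : ∀ j ≤ m, (y ∈ S j ↔ x ∈ S j) := by
    intro j hj
    have h1 := hS.2 j (m+2) (by omega) (by omega)
    have h2 := hout j hj
    by_cases h3 : S (m+2) ⊆ S j
    · exact ⟨fun _ => h3 hx2, fun _ => h3 hy2⟩
    · have h4 : ∀ a, a ∈ S j → a ∉ S (m+2) := fun a ha hb =>
        h1 ⟨⟨a, Finset.mem_inter.2 ⟨ha, hb⟩⟩, h2, h3⟩
      exact ⟨fun h => absurd hy2 (h4 _ h), fun h => absurd hx2 (h4 _ h)⟩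
  have hnon : ∀ z, ∀ i j, i + 1 < j → j < m + 2 →
      ¬ Overlaps ((S i).erase z) ((S j).erase z) := fun z i j h1 h2 h3 =>
    hS.2 i j h1 (by omega) (ov_erase z h3)
  by_cases hA : ∃ w, w ∈ S m ∧ w ∉ S (m+1) ∧ w ≠ y
  · refine ⟨y, hy2, ?_, hnon y⟩
    obtain ⟨w, hw, hw', hwy⟩ := hA
    intro i hi
    obtain ⟨⟨a, ha1, ha2⟩, ⟨b, hb1, hb2⟩, ⟨c, hc1, hc2⟩⟩ :=
      (ov_iff _ _).1 (hS.1 i (by omega))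
    rw [ov_iff]
    simp only [Finset.mem_erase]
    have ki := key i (by omega)
    by_cases him : i = m
    · subst him
      refine ⟨⟨a, ?_⟩, ⟨w, ?_⟩, ⟨c, ?_⟩⟩
      · have : a ≠ y := by rintro rfl; exact hy1 ha2
        tauto
      · tauto
      · have : c ≠ y := by rintro rfl; exact hy1 hc1
        tauto
    · have kj := key (i+1) (by omega)
      refine ⟨?_, ?_, ?_⟩
      · by_cases h : a = y
        · subst h; exact ⟨x, by tauto⟩
        · exact ⟨a, by tauto⟩
      · by_cases h : b = y
        · subst h; exact ⟨x, by tauto⟩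
        · exact ⟨b, by tauto⟩
      · by_cases h : c = y
        · subst h; exact ⟨x, by tauto⟩
        · exact ⟨c, by tauto⟩
  · push Not at hA
    obtain ⟨k, rfl⟩ : ∃ k, m = k + 1 := ⟨m - 1, by omega⟩
    obtain ⟨-, ⟨b, hb1, hb2⟩, ⟨c, hc1, hc2⟩⟩ := (ov_iff _ _).1 (hS.1 (k+1) (by omega))
    obtain rfl := hA b hb1 hb2
    have hxm : x ∈ S (k+1) := (key _ le_rfl).1 hb1
    obtain ⟨⟨t, ht1, ht2⟩, ⟨d, hd1, hd2⟩, ⟨e, he1, he2⟩⟩ :=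
      (ov_iff _ _).1 (hS.1 k (by omega))
    have hno := hS.2 k (k+1+1) (by omega) (by omega)
    have hyk : b ∉ S k := by
      intro hy
      have hx := (key k (by omega)).1 hy
      apply hno
      refine (ov_iff _ _).2 ⟨⟨x, hx, hx1⟩, ⟨b, hy, hb2⟩, ?_⟩
      refine ⟨e, ?_, he2⟩
      by_contra h
      exact he2 (hA e he1 h ▸ hy)
    have hxk : x ∉ S k := fun h => hyk ((key k (by omega)).2 h)
    have htx : t ≠ x := by rintro rfl; exact hxk ht1
    have htm : t ∈ S (k+1+1) := by
      by_contra h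
      exact hyk (hA t ht2 h ▸ ht1)
    have hsub : S k ⊆ S (k+1+1) := by
      intro a ha
      by_contra h
      exact hno ((ov_iff _ _).2 ⟨⟨t, ht1, htm⟩, ⟨a, ha, h⟩, ⟨x, hx1, hxk⟩⟩)
    have hall := down hS (k := k+1+1) (by omega) k (by omega) hsub
    have hxj : ∀ j ≤ k, x ∉ S j := fun j hj h =>
      hb2 (hall j hj ((key j (by omega)).2 h))
    refine ⟨x, hx2, ?_, hnon x⟩
    intro i hi
    show Overlaps ((S i).erase x) ((S (i+1)).erase x)
    by_cases h1 : i = k + 1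
    · subst h1
      rw [ov_iff]
      simp only [Finset.mem_erase]
      refine ⟨⟨t, by tauto⟩, ⟨b, by tauto⟩, ⟨c, ?_⟩⟩
      have : c ≠ x := by rintro rfl; exact hc2 hxm
      tauto
    by_cases h2 : i = k
    · subst h2
      rw [ov_iff]
      simp only [Finset.mem_erase]
      refine ⟨⟨t, by tauto⟩, ⟨d, ?_⟩, ⟨b, by tauto⟩⟩
      have : d ≠ x := by rintro rfl; exact hd2 hxm
      tauto
    rw [Finset.erase_eq_of_notMem (hxj i (by omega)),
      Finset.erase_eq_of_notMem (hxj (i+1) (by omega))]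
    exact hS.1 i (by omega)

theorem prep_rev {n : ℕ} {S : ℕ → Finset ℕ} (hS : PRep (n+1) S) :
    PRep (n+1) (fun i => S (n - i)) := by
  refine ⟨fun i hi => ?_, fun i j h1 h2 h => ?_⟩
  · have := hS.1 (n - (i+1)) (by omega)
    rw [show n - (i+1) + 1 = n - i by omega] at this
    exact ov_symm this
  · exact hS.2 (n - j) (n - i) (by omega) (by omega) (ov_symm h)

theorem lower (m : ℕ) : ∀ (S : ℕ → Finset ℕ) (U : Finset ℕ), PRep (m+3) S →
    (∀ i < m + 3, S i ⊆ U) → m + 3 ≤ U.card := by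
  induction m with
  | zero =>
    intro S U hS hU
    obtain ⟨⟨a, ha1, ha2⟩, ⟨b, hb1, hb2⟩, ⟨c, hc1, hc2⟩⟩ :=
      (ov_iff _ _).1 (hS.1 0 (by omega))
    have h : ({a, b, c} : Finset ℕ) ⊆ U := by
      intro z hz
      simp only [Finset.mem_insert, Finset.mem_singleton] at hz
      rcases hz with rfl | rfl | rfl
      · exact hU 0 (by omega) ha1
      · exact hU 0 (by omega) hb1
      · exact hU 1 (by omega) hc1
    have h3 : ({a, b, c} : Finset ℕ).card = 3 := by
      rw [Finset.card_eq_three]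
      refine ⟨a, b, c, ?_, ?_, ?_, rfl⟩ <;> rintro rfl <;> tauto
    have := Finset.card_le_card h
    omega
  | succ m ih =>
    intro S U hS hU
    have main : ∀ T : ℕ → Finset ℕ, PRep (m+1+3) T → (∀ i < m + 1 + 3, T i ⊆ U) →
        (∀ j ≤ m+1, ¬ T j ⊆ T (m+1+2)) → m + 1 + 3 ≤ U.card := by
      intro T hT hTU hout
      obtain ⟨z, hz, hr⟩ := step (by omega) hT hout
      have hzU := hTU _ (by omega) hz
      have := ih _ (U.erase z) hr (fun i hi => Finset.erase_subset_erase _ (hTU i (by omega)))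
      have h2 := Finset.card_erase_add_one hzU
      omega
    by_cases h1 : ∀ j ≤ m+1, ¬ S j ⊆ S (m+1+2)
    · exact main S hS hU h1
    have hR := prep_rev (n := m+3) hS
    by_cases h2 : ∀ j ≤ m+1, ¬ S (m+3-j) ⊆ S (m+3-(m+1+2))
    · exact main _ hR (fun i hi => hU _ (by omega)) h2
    exfalso
    push Not at h1 h2
    obtain ⟨j, hj, h1⟩ := h1
    obtain ⟨k, hk, h2⟩ := h2
    have e1 := down hS (by omega) j (by omega) h1 0 (by omega)
    have e2 := down hR (k := m+1+2) (by omega) k (by omega) h2 0 (by omega)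
    have e2' : S (m+3) ⊆ S 0 := by simpa [show m+3-(m+1+2) = 0 by omega] using e2
    have e : S 0 = S (m+3) := Finset.Subset.antisymm e1 e2'
    have h := hS.1 0 (by omega)
    rw [e] at h
    exact hS.2 (0+1) (m+3) (by omega) (by omega) (ov_symm h)

theorem path_rep (n : ℕ) (hn : 3 ≤ n) :
    ∃ S : Fin n → Finset ℕ, IsOverlapRep (SimpleGraph.pathGraph n) S ∧
      (⋃ v, (S v : Set ℕ)).ncard = n := by
  refine ⟨fun v => if v.val + 1 < n then {v.val, v.val+1} else Finset.range (n-1),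
    ⟨?_, ?_⟩, ?_⟩
  · intro v
    dsimp only
    split_ifs
    · simp
    · simp; omega
  · rintro ⟨u, hu⟩ ⟨v, hv⟩
    rw [SimpleGraph.pathGraph_adj, ov_iff]
    dsimp only
    have hm : ∀ w a : ℕ, a ∈ (if w + 1 < n then {w, w+1} else Finset.range (n-1) : Finset ℕ) ↔
      (w + 1 < n ∧ (a = w ∨ a = w + 1)) ∨ (¬ w + 1 < n ∧ a < n - 1) := by
      intro w a
      split_ifs with h <;> simp [h]
    simp only [hm]
    constructor
    · have aux : ∀ u v : ℕ, u < n → v < n → u + 1 = v →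
        (∃ a, ((u + 1 < n ∧ (a = u ∨ a = u + 1)) ∨ (¬ u + 1 < n ∧ a < n - 1)) ∧
          ((v + 1 < n ∧ (a = v ∨ a = v + 1)) ∨ (¬ v + 1 < n ∧ a < n - 1))) ∧
        (∃ a, ((u + 1 < n ∧ (a = u ∨ a = u + 1)) ∨ (¬ u + 1 < n ∧ a < n - 1)) ∧
          ¬ ((v + 1 < n ∧ (a = v ∨ a = v + 1)) ∨ (¬ v + 1 < n ∧ a < n - 1))) ∧
        (∃ a, ((v + 1 < n ∧ (a = v ∨ a = v + 1)) ∨ (¬ v + 1 < n ∧ a < n - 1)) ∧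
          ¬ ((u + 1 < n ∧ (a = u ∨ a = u + 1)) ∨ (¬ u + 1 < n ∧ a < n - 1))) := by
        rintro u v hu hv rfl
        by_cases h : u + 1 + 1 < n
        · exact ⟨⟨u+1, by omega⟩, ⟨u, by omega⟩, ⟨u+2, by omega⟩⟩
        · exact ⟨⟨u, by omega⟩, ⟨u+1, by omega⟩, ⟨0, by omega⟩⟩
      rintro (h | h)
      · exact aux u v hu hv h
      · obtain ⟨⟨a, h1, h2⟩, h3, h4⟩ := aux v u hv hu h
        exact ⟨⟨a, h2, h1⟩, h4, h3⟩
    · rintro ⟨⟨a, ha⟩, ⟨b, hb⟩, ⟨c, hc⟩⟩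
      omega
  · have : (⋃ v : Fin n, (((if v.val + 1 < n then {v.val, v.val+1} else Finset.range (n-1) :
        Finset ℕ)) : Set ℕ)) = (Finset.range n : Set ℕ) := by
      ext a
      simp only [Set.mem_iUnion, Finset.mem_coe, Finset.mem_range]
      constructor
      · rintro ⟨v, hv⟩
        split_ifs at hv <;> simp at hv <;> omega
      · intro ha
        by_cases h : a + 1 < n
        · exact ⟨⟨a, ha⟩, by simp [h]⟩
        · refine ⟨⟨a - 1, by omega⟩, ?_⟩
          have : a - 1 + 1 < n := by omega
          simp [this]; omega
    dsimp only
    rw [this, Set.ncard_coe_finset, Finset.card_range]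

/-- For `n ≥ 3`, the overlap number of the path on `n` vertices is `n`. -/
theorem overlapNumber_path (n : ℕ) (hn : 3 ≤ n) :
    overlapNumber (SimpleGraph.pathGraph n) = n := by
  apply le_antisymm
  · exact Nat.sInf_le (path_rep n hn)
  · refine le_csInf ⟨n, path_rep n hn⟩ ?_
    rintro k ⟨S, hS, rfl⟩
    obtain ⟨m, rfl⟩ : ∃ m, n = m + 3 := ⟨n - 3, by omega⟩
    have hU : (⋃ v, (S v : Set ℕ)) = ((Finset.univ.biUnion S : Finset ℕ) : Set ℕ) := by
      ext; simp
    rw [hU, Set.ncard_coe_finset]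
    apply lower m (fun i => if h : i < m + 3 then S ⟨i, h⟩ else ∅)
    · refine ⟨fun i hi => ?_, fun i j h1 h2 => ?_⟩
      · simp only [hi, show i < m + 3 by omega, dif_pos]
        exact (hS.2 _ _).1 (by rw [SimpleGraph.pathGraph_adj]; simp)
      · simp only [h2, show i < m + 3 by omega, dif_pos]
        rw [← hS.2, SimpleGraph.pathGraph_adj]
        simp only
        omega
    · intro i hi
      simp only [hi, dif_pos]
      exact Finset.subset_biUnion_of_mem S (Finset.mem_univ _)
end

section
/- If G is a graph with connected components B_1, ..., B_k, then φ(G) = Σ_{i=1}^k φ(B_i) − (k − 1). -/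
open Classical in
/-- Union of the sets of vertices lying in the components of `s`. -/
noncomputable def unionOn {V : Type*} [Fintype V] (G : SimpleGraph V)
    (S : V → Finset ℕ) (s : Finset G.ConnectedComponent) : Finset ℕ :=
  (Finset.univ.filter (fun v => G.connectedComponentMk v ∈ s)).biUnion S

/-- `S` represents the part of `G` given by the components in `s`. -/
def RepOn {V : Type*} (G : SimpleGraph V)
    (S : V → Finset ℕ) (s : Finset G.ConnectedComponent) : Prop :=
  (∀ v, G.connectedComponentMk v ∈ s → (S v).Nonempty) ∧
  ∀ u v, G.connectedComponentMk u ∈ s → G.connectedComponentMk v ∈ s →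
    (G.Adj u v ↔ Overlaps (S u) (S v))

theorem mem_unionOn {V : Type*} [Fintype V] (G : SimpleGraph V)
    (S : V → Finset ℕ) (s : Finset G.ConnectedComponent) (a : ℕ) :
    a ∈ unionOn G S s ↔ ∃ v, G.connectedComponentMk v ∈ s ∧ a ∈ S v := by
  simp [unionOn]

theorem exists_rep {V : Type*} [Finite V] (G : SimpleGraph V) :
    ∃ S : V → Finset ℕ, IsOverlapRep G S := by
  classical
  have := Fintype.ofFinite V
  obtain ⟨f, hf⟩ := Countable.exists_injective_nat (Sym2 V)
  let E : V → Finset (Sym2 V) := fun v =>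
    Finset.univ.filter (fun e => v ∈ e ∧ (e = s(v, v) ∨ e ∈ G.edgeSet))
  have hE : ∀ v e, e ∈ E v ↔ (v ∈ e ∧ (e = s(v, v) ∨ e ∈ G.edgeSet)) := by
    intro v e; simp [E]
  refine ⟨fun v => (E v).image f, fun v => ⟨f s(v, v), ?_⟩, fun u v => ⟨fun h => ?_, fun h => ?_⟩⟩
  · exact Finset.mem_image_of_mem _ ((hE _ _).2 (by simp))
  · have hne := h.ne
    refine ⟨⟨f s(u, v), ?_⟩, fun hs => ?_, fun hs => ?_⟩
    · refine Finset.mem_inter.2 ⟨Finset.mem_image_of_mem _ ((hE _ _).2 ?_),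
        Finset.mem_image_of_mem _ ((hE _ _).2 ?_)⟩
      · exact ⟨by simp, Or.inr h⟩
      · exact ⟨by simp, Or.inr h⟩
    · rw [Finset.image_subset_image_iff hf] at hs
      have := (hE _ _).1 (hs ((hE u s(u, u)).2 (by simp)))
      simp at this
      exact hne this.1.symm
    · rw [Finset.image_subset_image_iff hf] at hs
      have := (hE _ _).1 (hs ((hE v s(v, v)).2 (by simp)))
      simp at this
      exact hne this.1
  · obtain ⟨⟨a, ha⟩, h1, h2⟩ := h
    have hne : u ≠ v := by
      rintro rfl
      exact h1 (Finset.Subset.refl _)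
    rw [← Finset.image_inter _ _ hf, Finset.mem_image] at ha
    obtain ⟨e, he, -⟩ := ha
    rw [Finset.mem_inter, hE, hE] at he
    obtain ⟨⟨hu, hu'⟩, hv, hv'⟩ := he
    have : e = s(u, v) := (Sym2.mem_and_mem_iff hne).1 ⟨hu, hv⟩
    subst this
    rcases hu' with h | h
    · simp at h; exact absurd h.symm hne
    · exact h

theorem overlapNumber_spec {V : Type*} [Finite V] (G : SimpleGraph V) :
    ∃ S : V → Finset ℕ, IsOverlapRep G S ∧ (⋃ v, (S v : Set ℕ)).ncard = overlapNumber G := by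
  obtain ⟨S, hS⟩ := exists_rep G
  exact Nat.sInf_mem (s := {n | ∃ S : V → Finset ℕ, IsOverlapRep G S ∧
    (⋃ v, (S v : Set ℕ)).ncard = n}) ⟨_, S, hS, rfl⟩

theorem overlapNumber_le {V : Type*} (G : SimpleGraph V) (S : V → Finset ℕ)
    (hS : IsOverlapRep G S) : overlapNumber G ≤ (⋃ v, (S v : Set ℕ)).ncard :=
  Nat.sInf_le ⟨S, hS, rfl⟩

theorem component_le {V : Type*} [Fintype V] (G : SimpleGraph V) (S : V → Finset ℕ)
    (s : Finset G.ConnectedComponent) (hS : RepOn G S s) (c : G.ConnectedComponent)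
    (hc : c ∈ s) : overlapNumber (G.induce c.supp) ≤ (unionOn G S {c}).card := by
  have key : ∀ v : c.supp, G.connectedComponentMk v.1 ∈ s := by
    rintro ⟨v, hv⟩
    rw [SimpleGraph.ConnectedComponent.mem_supp_iff] at hv
    simpa [hv] using hc
  refine (overlapNumber_le _ (fun v : c.supp => S v.1) ⟨fun v => hS.1 _ (key v), fun u v => ?_⟩).trans
    (le_of_eq ?_)
  · rw [← hS.2 _ _ (key u) (key v)]; simp
  · rw [← Set.ncard_coe_finset]
    congr 1
    ext a
    simp [mem_unionOn]

theorem component_exists {V : Type*} [Fintype V] (G : SimpleGraph V)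
    (c : G.ConnectedComponent) : ∃ S : V → Finset ℕ, RepOn G S {c} ∧
      (unionOn G S {c}).card = overlapNumber (G.induce c.supp) := by
  classical
  obtain ⟨T, hT, hn⟩ := overlapNumber_spec (G.induce c.supp)
  have hTv : ∀ v (h : v ∈ c.supp), (if h : v ∈ c.supp then T ⟨v, h⟩ else ∅) = T ⟨v, h⟩ := by
    intro v h; simp only [dif_pos h]
  refine ⟨fun v => if h : v ∈ c.supp then T ⟨v, h⟩ else ∅, ⟨?_, ?_⟩, ?_⟩
  · intro v hv
    have hv : v ∈ c.supp := by simpa using hv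
    simp only [hTv v hv]
    exact hT.1 _
  · intro u v hu hv
    have hu : u ∈ c.supp := by simpa using hu
    have hv : v ∈ c.supp := by simpa using hv
    simp only [hTv v hv, hTv u hu]
    rw [← hT.2]; simp
  · rw [← hn, ← Set.ncard_coe_finset]
    congr 1
    ext a
    simp only [Finset.mem_coe, mem_unionOn, Set.mem_iUnion, Finset.mem_singleton]
    constructor
    · rintro ⟨v, hv, ha⟩
      have hv : v ∈ c.supp := by simpa using hv
      rw [hTv v hv] at ha
      exact ⟨_, ha⟩
    · rintro ⟨⟨v, hv⟩, ha⟩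
      refine ⟨v, by simpa using hv, ?_⟩
      rw [hTv v hv]; exact ha

theorem propagate {V : Type*} (G : SimpleGraph V) (P : V → Prop) (s : G.ConnectedComponent)
    (h : ∀ u v, G.connectedComponentMk u = s → G.connectedComponentMk v = s →
      G.Adj u v → P u → P v) (u v : V)
    (hu : G.connectedComponentMk u = s) (hv : G.connectedComponentMk v = s) (hP : P u) : P v := by
  obtain ⟨w⟩ := SimpleGraph.ConnectedComponent.exact (hu.trans hv.symm)
  induction w with
  | nil => exact hP
  | cons hadj p ih =>
    have := (SimpleGraph.ConnectedComponent.sound hadj.reachable).symm.trans hu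
    exact ih this hv (h _ _ hu this hadj hP)

theorem overlaps_sdiff (A B U : Finset ℕ) (x : ℕ) (hx : x ∈ U)
    (hA : U ⊆ A ∨ Disjoint A U) (hB : U ⊆ B ∨ Disjoint B U) :
    Overlaps (A \ U.erase x) (B \ U.erase x) ↔ Overlaps A B := by
  have sub : ∀ A B : Finset ℕ, (U ⊆ A ∨ Disjoint A U) → (U ⊆ B ∨ Disjoint B U) →
      (A \ U.erase x ⊆ B \ U.erase x ↔ A ⊆ B) := by
    intro A B hA hB
    simp only [Finset.subset_iff, Finset.disjoint_left, Finset.mem_sdiff, Finset.mem_erase] at *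
    grind
  have int : ((A \ U.erase x) ∩ (B \ U.erase x)).Nonempty ↔ (A ∩ B).Nonempty := by
    simp only [Finset.Nonempty, Finset.subset_iff, Finset.disjoint_left, Finset.mem_sdiff,
      Finset.mem_erase, Finset.mem_inter] at *
    grind
  unfold Overlaps
  rw [sub A B hA hB, sub B A hB hA, int]

/-- Blow up the point `x` to the set `T`. -/
def blow (x : ℕ) (T A : Finset ℕ) : Finset ℕ := if x ∈ A then A.erase x ∪ T else A

theorem mem_blow (x : ℕ) (T A : Finset ℕ) (hA : Disjoint A T) (a : ℕ) :
    a ∈ blow x T A ↔ (a ∈ A ∧ a ≠ x) ∨ (x ∈ A ∧ a ∈ T) := by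
  unfold blow
  split_ifs with h <;> grind

theorem overlaps_blow (A B T : Finset ℕ) (x : ℕ) (hT : T.Nonempty)
    (hA : Disjoint A T) (hB : Disjoint B T) :
    Overlaps (blow x T A) (blow x T B) ↔ Overlaps A B := by
  obtain ⟨t, ht⟩ := hT
  have sub : ∀ A B : Finset ℕ, Disjoint A T → Disjoint B T →
      (blow x T A ⊆ blow x T B ↔ A ⊆ B) := by
    intro A B hA hB
    simp only [Finset.subset_iff, mem_blow x T A hA, mem_blow x T B hB]
    simp only [Finset.disjoint_left] at *
    grind
  have int : ((blow x T A) ∩ (blow x T B)).Nonempty ↔ (A ∩ B).Nonempty := by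
    simp only [Finset.Nonempty, Finset.mem_inter, mem_blow x T A hA, mem_blow x T B hB]
    simp only [Finset.disjoint_left] at *
    grind
  unfold Overlaps
  rw [sub A B hA hB, sub B A hB hA, int]

theorem upper {V : Type*} [Fintype V] (G : SimpleGraph V)
    (s : Finset G.ConnectedComponent) (hs : s.Nonempty) :
    ∃ S : V → Finset ℕ, RepOn G S s ∧
      (unionOn G S s).card + s.card ≤
        (∑ c ∈ s, overlapNumber (G.induce c.supp)) + 1 := by
  classical
  induction hs using Finset.Nonempty.cons_induction with
  | singleton c =>
    obtain ⟨S, hS, hn⟩ := component_exists G c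
    exact ⟨S, hS, by simp [hn]⟩
  | cons c s hc hs ih =>
    obtain ⟨S, hS, hSn⟩ := ih
    obtain ⟨T₀, hT₀, hTn₀⟩ := component_exists G c
    -- shift T₀ away from S
    obtain ⟨N, hN⟩ : ∃ N, ∀ a ∈ unionOn G S s, a < N :=
      ⟨(unionOn G S s).sup id + 1, fun a ha => Nat.lt_succ_of_le (Finset.le_sup (f := id) ha)⟩
    let e : ℕ ↪ ℕ := addLeftEmbedding N
    have he : ∀ a, N ≤ e a := fun a => by simp [e]
    let T : V → Finset ℕ := fun v => (T₀ v).map e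
    have hT : RepOn G T {c} := by
      refine ⟨fun v hv => (hT₀.1 v hv).map, fun u v hu hv => ?_⟩
      rw [hT₀.2 u v hu hv]
      simp only [Overlaps, T, ← Finset.map_inter, Finset.map_nonempty, Finset.map_subset_map]
    have hTU : unionOn G T {c} = (unionOn G T₀ {c}).map e := by
      ext a
      simp only [mem_unionOn, T, Finset.mem_map]
      grind
    have hTn : (unionOn G T {c}).card = overlapNumber (G.induce c.supp) := by
      rw [hTU, Finset.card_map, hTn₀]
    have hdis : ∀ a ∈ unionOn G S s, a ∉ unionOn G T {c} := by
      intro a ha hb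
      rw [hTU, Finset.mem_map] at hb
      obtain ⟨b, -, rfl⟩ := hb
      exact absurd (hN _ ha) (not_lt.2 (he b))
    set W := unionOn G T {c} with hW
    have hWne : W.Nonempty := by
      obtain ⟨v, rfl⟩ := c.exists_rep
      obtain ⟨a, ha⟩ := hT.1 v (Finset.mem_singleton_self _)
      exact ⟨a, (mem_unionOn ..).2 ⟨v, Finset.mem_singleton_self _, ha⟩⟩
    obtain ⟨x, hx⟩ : (unionOn G S s).Nonempty := by
      obtain ⟨d, hd⟩ := hs
      obtain ⟨v, rfl⟩ := d.exists_rep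
      obtain ⟨a, ha⟩ := hS.1 v hd
      exact ⟨a, (mem_unionOn ..).2 ⟨v, hd, ha⟩⟩
    have hSd : ∀ v, G.connectedComponentMk v ∈ s → Disjoint (S v) W := by
      intro v hv
      rw [Finset.disjoint_left]
      exact fun a ha => hdis a ((mem_unionOn ..).2 ⟨v, hv, ha⟩)
    have hTW : ∀ v, G.connectedComponentMk v = c → T v ⊆ W := fun v hv a ha =>
      (mem_unionOn ..).2 ⟨v, Finset.mem_singleton.2 hv, ha⟩
    let R : V → Finset ℕ := fun v => if G.connectedComponentMk v = c then T v else blow x W (S v)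
    have hR1 : ∀ v, G.connectedComponentMk v = c → R v = T v := fun v hv => by simp [R, hv]
    have hR2 : ∀ v, G.connectedComponentMk v ∈ s → R v = blow x W (S v) := fun v hv => by
      have : G.connectedComponentMk v ≠ c := fun h => hc (h ▸ hv)
      simp [R, this]
    have hno : ∀ u v, G.connectedComponentMk u = c → G.connectedComponentMk v ∈ s →
        ¬ G.Adj u v ∧ ¬ Overlaps (R u) (R v) ∧ ¬ Overlaps (R v) (R u) := by
      intro u v hu hv
      refine ⟨fun h => hc ?_, ?_⟩
      · rw [← hu, SimpleGraph.ConnectedComponent.sound h.reachable]; exact hv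
      · rw [hR1 u hu, hR2 v hv]
        have h1 := hTW u hu
        have h2 := hSd v hv
        by_cases hxv : x ∈ S v
        · have : T u ⊆ blow x W (S v) := fun a ha => (mem_blow _ _ _ h2 a).2 (Or.inr ⟨hxv, h1 ha⟩)
          exact ⟨fun h => h.2.1 this, fun h => h.2.2 this⟩
        · have hb : blow x W (S v) = S v := by simp [blow, hxv]
          rw [hb]
          have hd : Disjoint (S v) (T u) := h2.mono_right h1
          constructor
          · rintro ⟨h, -⟩
            rw [Finset.inter_comm, Finset.disjoint_iff_inter_eq_empty.1 hd] at h
            simp at h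
          · rintro ⟨h, -⟩
            rw [Finset.disjoint_iff_inter_eq_empty.1 hd] at h
            simp at h
    refine ⟨R, ⟨?_, ?_⟩, ?_⟩
    · intro v hv
      rcases Finset.mem_cons.1 hv with hv | hv
      · rw [hR1 v hv]; exact hT.1 v (Finset.mem_singleton.2 hv)
      · rw [hR2 v hv]
        obtain ⟨a, ha⟩ := hS.1 v hv
        obtain ⟨t, ht⟩ := hWne
        by_cases hxv : x ∈ S v
        · exact ⟨t, (mem_blow _ _ _ (hSd v hv) t).2 (Or.inr ⟨hxv, ht⟩)⟩
        · exact ⟨a, by simpa [blow, hxv] using ha⟩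
    · intro u v hu hv
      rcases Finset.mem_cons.1 hu with hu | hu <;> rcases Finset.mem_cons.1 hv with hv | hv
      · rw [hR1 u hu, hR1 v hv]
        exact hT.2 u v (Finset.mem_singleton.2 hu) (Finset.mem_singleton.2 hv)
      · have := hno u v hu hv; tauto
      · have := hno v u hv hu
        rw [SimpleGraph.adj_comm]; tauto
      · rw [hR2 u hu, hR2 v hv, overlaps_blow _ _ _ _ hWne (hSd u hu) (hSd v hv)]
        exact hS.2 u v hu hv
    · have hsub : unionOn G R (Finset.cons c s hc) ⊆ (unionOn G S s).erase x ∪ W := by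
        intro a ha
        obtain ⟨v, hv, ha⟩ := (mem_unionOn ..).1 ha
        rcases Finset.mem_cons.1 hv with hv | hv
        · rw [hR1 v hv] at ha
          exact Finset.mem_union_right _ (hTW v hv ha)
        · rw [hR2 v hv, mem_blow _ _ _ (hSd v hv)] at ha
          rcases ha with ⟨h1, h2⟩ | ⟨-, h⟩
          · exact Finset.mem_union_left _
              (Finset.mem_erase.2 ⟨h2, (mem_unionOn ..).2 ⟨v, hv, h1⟩⟩)
          · exact Finset.mem_union_right _ h
      have h1 := (Finset.card_le_card hsub).trans (Finset.card_union_le _ _)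
      have h2 := Finset.card_erase_add_one hx
      rw [Finset.card_cons, Finset.sum_cons, ← hTn]
      omega

theorem lower_s17 {V : Type*} [Fintype V] (G : SimpleGraph V) (n : ℕ) :
    ∀ (s : Finset G.ConnectedComponent), s.card = n + 1 → ∀ S : V → Finset ℕ, RepOn G S s →
      (∑ c ∈ s, overlapNumber (G.induce c.supp)) + 1 ≤ (unionOn G S s).card + s.card := by
  classical
  induction n with
  | zero =>
    intro s hs S hS
    obtain ⟨c, rfl⟩ := Finset.card_eq_one.1 hs
    have := component_le G S _ hS c (Finset.mem_singleton_self c)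
    simpa using this
  | succ n ih =>
    intro s hs S hS
    have hmax : ∀ c : G.ConnectedComponent, ∃ m, G.connectedComponentMk m = c ∧
        ∀ v, G.connectedComponentMk v = c → (S v).card ≤ (S m).card := by
      intro c
      obtain ⟨v, hv⟩ := c.exists_rep
      obtain ⟨m, hm, hm'⟩ := Finset.exists_max_image
        (Finset.univ.filter (fun v => G.connectedComponentMk v = c)) (fun v => (S v).card)
        ⟨v, Finset.mem_filter.2 ⟨Finset.mem_univ _, hv⟩⟩
      exact ⟨m, by simpa using hm, fun v hv => hm' v (by simpa using hv)⟩
    choose m hm hm' using hmax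
    obtain ⟨c, hc, hmin⟩ := Finset.exists_min_image s (fun c => (S (m c)).card)
      (Finset.card_pos.1 (by omega))
    -- no overlap across components
    have hno : ∀ u v, G.connectedComponentMk u ∈ s → G.connectedComponentMk v ∈ s →
        G.connectedComponentMk u ≠ G.connectedComponentMk v → ¬ Overlaps (S u) (S v) := by
      intro u v hu hv hne h
      exact hne (SimpleGraph.ConnectedComponent.sound ((hS.2 u v hu hv).2 h).reachable)
    have hprop : ∀ u w, G.connectedComponentMk u ∈ s → G.connectedComponentMk w ∈ s →
        G.connectedComponentMk u ≠ G.connectedComponentMk w → S u ⊆ S w →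
        ∀ v, G.connectedComponentMk v = G.connectedComponentMk u → S v ⊆ S w := by
      intro u w hu hw hne hsub v hv
      refine propagate G (fun v => S v ⊆ S w) (G.connectedComponentMk u) ?_ u v rfl hv hsub
      intro a b ha hb hab h
      have ho := (hS.2 a b (ha ▸ hu) (hb ▸ hu)).1 hab
      have hn := hno b w (hb ▸ hu) hw (hb ▸ hne)
      by_contra hbw
      refine hn ⟨?_, hbw, fun hwb => ho.2.1 (h.trans hwb)⟩
      obtain ⟨z, hz⟩ := ho.1
      rw [Finset.mem_inter] at hz
      exact ⟨z, Finset.mem_inter.2 ⟨hz.2, h hz.1⟩⟩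
    set U := unionOn G S {c} with hU
    have hmU : ∀ v, G.connectedComponentMk v = c → S v ⊆ U := fun v hv a ha =>
      (mem_unionOn ..).2 ⟨v, Finset.mem_singleton.2 hv, ha⟩
    have hUsub : ∀ B : Finset ℕ, (∀ v, G.connectedComponentMk v = c → S v ⊆ B) → U ⊆ B := by
      intro B hB a ha
      obtain ⟨v, hv, ha⟩ := (mem_unionOn ..).1 ha
      exact hB v (Finset.mem_singleton.1 hv) ha
    have key : ∀ w, G.connectedComponentMk w ∈ s.erase c → U ⊆ S w ∨ Disjoint (S w) U := by
      intro w hw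
      obtain ⟨hwc, hw⟩ := Finset.mem_erase.1 hw
      by_contra! hcon
      obtain ⟨h1, h2⟩ := hcon
      rw [Finset.not_disjoint_iff] at h2
      obtain ⟨a, haw, haU⟩ := h2
      obtain ⟨v, hv, hav⟩ := (mem_unionOn ..).1 haU
      have hv := Finset.mem_singleton.1 hv
      have hvs : G.connectedComponentMk v ∈ s := hv ▸ hc
      have hvw : G.connectedComponentMk v ≠ G.connectedComponentMk w := fun h => hwc (h ▸ hv)
      have fin : ¬ S v ⊆ S w := fun h => h1 (hUsub _ fun v' hv' =>
        hprop v w hvs hw hvw h v' (hv'.trans hv.symm))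
      have hwv : S w ⊆ S v := by
        by_contra hwv
        exact hno v w hvs hw hvw ⟨⟨a, Finset.mem_inter.2 ⟨hav, haw⟩⟩, fin, hwv⟩
      -- everything in the component of w lies inside S v
      have hall := hprop w v hw hvs hvw.symm hwv
      have hmw := hm (G.connectedComponentMk w)
      have heq : S (m (G.connectedComponentMk w)) = S v :=
        Finset.eq_of_subset_of_card_le (hall _ hmw) ((hm' c v hv).trans (hmin _ hw))
      have hweq : S w = S v := by
        refine propagate G (fun z => S z = S v) (G.connectedComponentMk w) ?_ _ w hmw rfl heq
        intro a b ha hb hab h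
        have ho := (hS.2 a b (ha ▸ hw) (hb ▸ hw)).1 hab
        rw [h] at ho
        exact absurd ho (hno v b hvs (hb ▸ hw) (hb ▸ hvw))
      exact fin hweq.symm.subset
    obtain ⟨x, hx⟩ : U.Nonempty := by
      obtain ⟨v, hv⟩ := c.exists_rep
      obtain ⟨a, ha⟩ := hS.1 v (by rw [← hv] at hc; exact hc)
      exact ⟨a, hmU v hv ha⟩
    have hrep : RepOn G (fun v => S v \ U.erase x) (s.erase c) := by
      refine ⟨fun v hv => ?_, fun u v hu hv => ?_⟩
      · obtain ⟨a, ha⟩ := hS.1 v (Finset.mem_of_mem_erase hv)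
        rcases key v hv with h | h
        · exact ⟨x, by simp [h hx]⟩
        · refine ⟨a, Finset.mem_sdiff.2 ⟨ha, fun h' => ?_⟩⟩
          exact Finset.disjoint_left.1 h ha (Finset.mem_of_mem_erase h')
      · rw [overlaps_sdiff _ _ _ _ hx (key u hu) (key v hv)]
        exact hS.2 u v (Finset.mem_of_mem_erase hu) (Finset.mem_of_mem_erase hv)
    have hcard : (s.erase c).card = n + 1 := by rw [Finset.card_erase_of_mem hc]; omega
    have h1 := ih _ hcard _ hrep
    have h2 := component_le G S s hS c hc
    rw [← hU] at h2
    have h3 : (unionOn G (fun v => S v \ U.erase x) (s.erase c)).card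
        ≤ (unionOn G S s \ U.erase x).card := by
      apply Finset.card_le_card
      intro a ha
      obtain ⟨v, hv, ha⟩ := (mem_unionOn ..).1 ha
      obtain ⟨ha, ha'⟩ := Finset.mem_sdiff.1 ha
      exact Finset.mem_sdiff.2 ⟨(mem_unionOn ..).2 ⟨v, Finset.mem_of_mem_erase hv, ha⟩, ha'⟩
    have hsubU : U.erase x ⊆ unionOn G S s := by
      intro a ha
      obtain ⟨v, hv, ha⟩ := (mem_unionOn ..).1 (Finset.mem_of_mem_erase ha)
      exact (mem_unionOn ..).2 ⟨v, by rw [Finset.mem_singleton.1 hv]; exact hc, ha⟩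
    have h4 := Finset.card_sdiff_add_card_eq_card hsubU
    have h5 := Finset.card_erase_add_one hx
    have h6 := Finset.add_sum_erase s (fun c => overlapNumber (G.induce c.supp)) hc
    omega

/-- If `G` has connected components `B₁, ..., B_k`, then
`φ(G) = Σᵢ φ(Bᵢ) − (k − 1)`. -/
theorem overlapNumber_components {V : Type*} [Fintype V] (G : SimpleGraph V)
    [Fintype G.ConnectedComponent] :
    overlapNumber G =
      (∑ c : G.ConnectedComponent, overlapNumber (G.induce c.supp)) -
        (Fintype.card G.ConnectedComponent - 1) := by
  have hun : ∀ S : V → Finset ℕ,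
      (⋃ v, (S v : Set ℕ)).ncard = (unionOn G S Finset.univ).card := by
    intro S
    rw [← Set.ncard_coe_finset]
    congr 1
    ext a
    simp [mem_unionOn]
  have hrep : ∀ S : V → Finset ℕ, RepOn G S Finset.univ ↔ IsOverlapRep G S := by
    intro S
    simp [RepOn, IsOverlapRep]
  rcases isEmpty_or_nonempty V with hV | ⟨⟨v⟩⟩
  · have h0 : IsEmpty G.ConnectedComponent :=
      ⟨fun c => by obtain ⟨v, -⟩ := c.exists_rep; exact hV.elim v⟩
    have := overlapNumber_le G (fun _ => ∅) ⟨fun v => hV.elim v, fun v => hV.elim v⟩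
    simpa using this
  · have hpos : 0 < Fintype.card G.ConnectedComponent :=
      Fintype.card_pos_iff.2 ⟨G.connectedComponentMk v⟩
    obtain ⟨S, hS, hn⟩ := upper G Finset.univ ⟨G.connectedComponentMk v, Finset.mem_univ _⟩
    have h1 := overlapNumber_le G S ((hrep S).1 hS)
    rw [hun] at h1
    obtain ⟨T, hT, hTn⟩ := overlapNumber_spec G
    rw [hun] at hTn
    have h2 := lower_s17 G (Fintype.card G.ConnectedComponent - 1) Finset.univ
      (by rw [Finset.card_univ]; omega) T ((hrep T).2 hT)
    rw [Finset.card_univ] at hn h2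
    omega
end
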